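/- If A ∈ ℝ^{n×n} is a nonsingular M-matrix (nonpositive off-diagonal entries and all eigenvalues with positive real part), then there exists a diagonal matrix W = diag(w_1,…,w_n) with w_i > 0 such that W·A + Aᵀ·W is symmetric positive definite. -/

import Mathlib

/-!
A matrix with nonpositive off-diagonal entries which maps some positive vector to a positive vector
is inverse-nonnegative, and hence has only positive real eigenvalues.

Conversely, suppose that the real eigenvalues of `A` are positive. Then `A + t • 1` is invertible
for all `t ≥ 0`, and the solution of `(A + t • 1) x = 1` depends continuously on `t`. It is positive
for large `t`. It stays positive as `t` decreases to `0`, because a nonnegative solution has no zero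
coordinate.

Applying this to `A` and to `Aᵀ` gives positive `x`, `y` with `A x` and `Aᵀ y` positive. With
`w = y / x`, so that `diag(w) x = y`, the symmetric matrix `diag(w) A + Aᵀ diag(w)` sends `x` to the
positive vector `w * A x + Aᵀ y`, so its eigenvalues are positive.
-/

open Matrix
open scoped NNReal

variable {ι R 𝕜 : Type*}

/-- The class `Z` of square matrices: all off-diagonal entries are nonpositive. -/
def IsZMatrix [Zero R] [LE R] (A : Matrix ι ι R) : Prop :=
  ∀ i j, i ≠ j → A i j ≤ 0

/-- Semipositivity: `A` maps some entrywise positive vector to an entrywise positive vector. Among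
the matrices in `Z`, this singles out the nonsingular M-matrices. -/
def IsSemipositive [Fintype ι] [NonUnitalNonAssocSemiring R] [LT R] (A : Matrix ι ι R) : Prop :=
  ∃ x : ι → R, (∀ i, 0 < x i) ∧ ∀ i, 0 < (A *ᵥ x) i

theorem IsZMatrix.transpose [Zero R] [LE R] {A : Matrix ι ι R} (hA : IsZMatrix A) :
    IsZMatrix Aᵀ :=
  fun i j hij => hA j i hij.symm

theorem IsZMatrix.add [AddMonoid R] [Preorder R] [AddLeftMono R] {A B : Matrix ι ι R}
    (hA : IsZMatrix A) (hB : IsZMatrix B) : IsZMatrix (A + B) :=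
  fun i j hij => add_nonpos (hA i j hij) (hB i j hij)

theorem IsZMatrix.add_smul_one [DecidableEq ι] [Semiring R] [LE R] {A : Matrix ι ι R}
    (hA : IsZMatrix A) (t : R) : IsZMatrix (A + t • 1) := fun i j hij => by
  simpa [one_apply_ne hij] using hA i j hij

section OrderedRing

variable [Fintype ι] [Ring R] [PartialOrder R] [IsOrderedRing R] {A : Matrix ι ι R}

theorem IsZMatrix.diagonal_mul [DecidableEq ι] (hA : IsZMatrix A) {w : ι → R}
    (hw : ∀ i, 0 ≤ w i) : IsZMatrix (diagonal w * A) := fun i j hij => by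
  simpa using mul_nonpos_of_nonneg_of_nonpos (hw i) (hA i j hij)

theorem IsZMatrix.mulVec_apply_nonpos (hA : IsZMatrix A) {x : ι → R} (hx : ∀ i, 0 ≤ x i) {k : ι}
    (hk : x k = 0) : (A *ᵥ x) k ≤ 0 := by
  refine Finset.sum_nonpos fun j _ => ?_
  obtain rfl | hkj := eq_or_ne k j
  · simp [hk]
  · exact mul_nonpos_of_nonpos_of_nonneg (hA k j hkj) (hx j)

theorem IsZMatrix.pos_of_mulVec_pos (hA : IsZMatrix A) {x : ι → R} (hx : ∀ i, 0 ≤ x i)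
    (hAx : ∀ i, 0 < (A *ᵥ x) i) (i : ι) : 0 < x i :=
  (hx i).lt_of_ne' fun hi => (hAx i).not_ge (hA.mulVec_apply_nonpos hx hi)

end OrderedRing

section StrictOrderedRing

variable [Fintype ι] [DecidableEq ι] [Ring R] [LinearOrder R] [IsStrictOrderedRing R]

theorem IsSemipositive.add_smul_one {A : Matrix ι ι R} (hA : IsSemipositive A) {t : R}
    (ht : 0 ≤ t) : IsSemipositive (A + t • 1) := by
  obtain ⟨x, hx, hAx⟩ := hA
  refine ⟨x, hx, fun i => ?_⟩
  simpa [add_mulVec, smul_mulVec] using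
    add_pos_of_pos_of_nonneg (hAx i) (mul_nonneg ht (hx i).le)

theorem exists_nonneg_isSemipositive_add_smul_one (A : Matrix ι ι R) :
    ∃ t : R, 0 ≤ t ∧ IsSemipositive (A + t • 1) := by
  obtain ⟨t, ht⟩ := Finite.exists_le fun i => -(A *ᵥ 1) i
  refine ⟨max t 0 + 1, by positivity, 1, fun _ => one_pos, fun i => ?_⟩
  have hi : -(A *ᵥ 1) i < max t 0 + 1 := ((ht i).trans (le_max_left t 0)).trans_lt (lt_add_one _)
  simpa [add_mulVec, smul_mulVec] using neg_lt_iff_pos_add'.mp hi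

end StrictOrderedRing

section OrderedField

variable [Fintype ι] [Field 𝕜] [LinearOrder 𝕜] [IsStrictOrderedRing 𝕜] {A : Matrix ι ι 𝕜}

theorem IsZMatrix.nonneg_of_mulVec_nonneg (hA : IsZMatrix A) (hA' : IsSemipositive A) {y : ι → 𝕜}
    (hy : ∀ i, 0 ≤ (A *ᵥ y) i) (i : ι) : 0 ≤ y i := by
  obtain ⟨x, hx, hAx⟩ := hA'
  have : Nonempty ι := ⟨i⟩
  obtain ⟨k, hk⟩ := Finite.exists_min fun j => y j / x j
  set c := y k / x k with hc
  have hcx : ∀ j, c * x j ≤ y j := fun j => (le_div_iff₀ (hx j)).mp (hk j)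
  have hAk : (A *ᵥ (y - c • x)) k ≤ 0 :=
    hA.mulVec_apply_nonpos (fun j => by simpa using hcx j) (by simp [hc, (hx k).ne'])
  have hcA : 0 ≤ c * (A *ᵥ x) k := by
    simp only [mulVec_sub, mulVec_smul, Pi.sub_apply, Pi.smul_apply, smul_eq_mul] at hAk
    linarith [hy k]
  have hc_nonneg : 0 ≤ c := nonneg_of_mul_nonneg_left hcA (hAx k)
  exact (mul_nonneg hc_nonneg (hx i).le).trans (hcx i)

theorem IsZMatrix.eq_zero_of_mulVec_eq_zero (hA : IsZMatrix A) (hA' : IsSemipositive A)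
    {y : ι → 𝕜} (hy : A *ᵥ y = 0) : y = 0 := by
  have h_nonneg := hA.nonneg_of_mulVec_nonneg hA' (y := y) (by simp [hy])
  have h_neg_nonneg := hA.nonneg_of_mulVec_nonneg hA' (y := -y) (by simp [mulVec_neg, hy])
  exact funext fun i => le_antisymm (neg_nonneg.mp (h_neg_nonneg i)) (h_nonneg i)

theorem IsZMatrix.eigenvalue_pos (hA : IsZMatrix A) (hA' : IsSemipositive A) {v : ι → 𝕜}
    (hv : v ≠ 0) {μ : 𝕜} (hμ : A *ᵥ v = μ • v) : 0 < μ := by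
  classical
  by_contra! hμ_nonpos
  have hker : (A + (-μ) • 1) *ᵥ v = 0 := by
    rw [add_mulVec, smul_mulVec, one_mulVec, hμ, neg_smul, add_neg_cancel]
  exact hv <| (hA.add_smul_one (-μ)).eq_zero_of_mulVec_eq_zero
    (hA'.add_smul_one (neg_nonneg.mpr hμ_nonpos)) hker

theorem IsSemipositive.exists_diagonal_mul_add_transpose_mul_diagonal [DecidableEq ι]
    (hA : IsSemipositive A) (hAt : IsSemipositive Aᵀ) :
    ∃ w : ι → 𝕜, (∀ i, 0 < w i) ∧ IsSemipositive (diagonal w * A + Aᵀ * diagonal w) := by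
  obtain ⟨x, hx, hAx⟩ := hA
  obtain ⟨y, hy, hAy⟩ := hAt
  have hw : ∀ i, 0 < (y / x) i := fun i => div_pos (hy i) (hx i)
  have hwx : diagonal (y / x) *ᵥ x = y := funext fun i => by
    simp [mulVec_diagonal, (hx i).ne']
  refine ⟨y / x, hw, x, hx, fun i => ?_⟩
  rw [add_mulVec, ← mulVec_mulVec, ← mulVec_mulVec, hwx, Pi.add_apply, mulVec_diagonal]
  exact add_pos (mul_pos (hw i) (hAx i)) (hAy i)

end OrderedField

theorem IsSemipositive.of_continuous {X : Type*} [Fintype ι] [DecidableEq ι] [Field 𝕜]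
    [LinearOrder 𝕜] [IsStrictOrderedRing 𝕜] [TopologicalSpace 𝕜] [OrderTopology 𝕜]
    [TopologicalSpace X] [PreconnectedSpace X] {B : X → Matrix ι ι 𝕜} (hB : Continuous B)
    (hZ : ∀ s, IsZMatrix (B s)) (hdet : ∀ s, IsUnit (B s).det) {s₀ : X}
    (hs₀ : IsSemipositive (B s₀)) (s : X) : IsSemipositive (B s) := by
  let x : X → ι → 𝕜 := fun s => (B s)⁻¹ *ᵥ 1
  have hB_inv : Continuous fun s => (B s)⁻¹ := continuous_iff_continuousAt.mpr fun s =>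
    (continuousAt_matrix_inv (B s) <| by
      simpa only [Ring.inverse_eq_inv'] using continuousAt_inv₀ (hdet s).ne_zero).comp
      hB.continuousAt
  have hx : ∀ i, Continuous fun s => x s i :=
    continuous_pi_iff.mp <| hB_inv.matrix_mulVec continuous_const
  have hBx : ∀ s, B s *ᵥ x s = 1 := fun s => by
    simp [x, mulVec_mulVec, mul_nonsing_inv _ (hdet s)]
  have hBx_pos : ∀ s i, 0 < (B s *ᵥ x s) i := fun s i => by simp [hBx s]
  have pos_iff_nonneg : ∀ s, (∀ i, 0 < x s i) ↔ ∀ i, 0 ≤ x s i := fun s =>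
    ⟨fun h i => (h i).le, fun h => (hZ s).pos_of_mulVec_pos h (hBx_pos s)⟩
  have hopen : IsOpen {s | ∀ i, 0 < x s i} := by
    simp only [Set.ofPred_forall]
    exact isOpen_iInter_of_finite fun i => isOpen_lt continuous_const (hx i)
  have hclosed : IsClosed {s | ∀ i, 0 < x s i} := by
    simp only [pos_iff_nonneg, Set.ofPred_forall]
    exact isClosed_iInter fun i => isClosed_le continuous_const (hx i)
  have hs₀_mem : s₀ ∈ {s | ∀ i, 0 < x s i} :=
    (pos_iff_nonneg s₀).mpr <| (hZ s₀).nonneg_of_mulVec_nonneg hs₀ fun i => (hBx_pos s₀ i).le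
  have huniv := IsClopen.eq_univ ⟨hclosed, hopen⟩ ⟨s₀, hs₀_mem⟩
  exact ⟨x s, Set.eq_univ_iff_forall.mp huniv s, hBx_pos s⟩

section Spectrum

variable [Fintype ι] [DecidableEq ι]

theorem isUnit_det_add_smul_one_of_neg_notMem_spectrum [CommRing R] {A : Matrix ι ι R} {t : R}
    (ht : -t ∉ spectrum R A) : IsUnit (A + t • 1).det := by
  rw [spectrum.notMem_iff, Algebra.algebraMap_eq_smul_one] at ht
  rw [← isUnit_iff_isUnit_det, ← IsUnit.neg_iff]
  convert ht using 1
  module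

theorem spectrum_transpose [CommRing R] (A : Matrix ι ι R) : spectrum R Aᵀ = spectrum R A := by
  ext μ
  simp only [mem_spectrum_iff_not_isUnit_eval_charpoly, charpoly_transpose]

theorem map_mem_roots_charpoly_of_mem_spectrum {K L : Type*} [Field K] [CommRing L] [IsDomain L]
    (f : K →+* L) {A : Matrix ι ι K} {μ : K} (hμ : μ ∈ spectrum K A) :
    f μ ∈ (A.map f).charpoly.roots := by
  rw [Polynomial.mem_roots (charpoly_monic _).ne_zero, charpoly_map]
  exact (mem_spectrum_iff_isRoot_charpoly.mp hμ).map

theorem IsZMatrix.isSemipositive_of_spectrum_pos {A : Matrix ι ι ℝ} (hA : IsZMatrix A)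
    (hpos : ∀ μ ∈ spectrum ℝ A, 0 < μ) : IsSemipositive A := by
  have hdet : ∀ t : ℝ≥0, IsUnit (A + (t : ℝ) • 1).det := fun t =>
    isUnit_det_add_smul_one_of_neg_notMem_spectrum fun ht =>
      (hpos _ ht).not_ge (neg_nonpos.mpr t.coe_nonneg)
  obtain ⟨t, ht, hAt⟩ := exists_nonneg_isSemipositive_add_smul_one A
  lift t to ℝ≥0 using ht
  simpa using IsSemipositive.of_continuous (by fun_prop) (fun s => hA.add_smul_one _) hdet hAt 0

end Spectrum

theorem IsZMatrix.posDef_of_isSemipositive [Fintype ι] {A : Matrix ι ι ℝ} (hA : IsZMatrix A)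
    (hA' : IsSemipositive A) (hsymm : A.IsHermitian) : A.PosDef := by
  classical
  exact hsymm.posDef_iff_eigenvalues_pos.mpr fun i => hA.eigenvalue_pos hA'
    ((WithLp.ofLp_eq_zero 2).not.mpr (hsymm.eigenvectorBasis.orthonormal.ne_zero i))
    (hsymm.mulVec_eigenvectorBasis i)

theorem stmt11_general [Fintype ι] [DecidableEq ι] {A : Matrix ι ι ℝ} (hA : IsZMatrix A)
    (hpos : ∀ μ ∈ spectrum ℝ A, 0 < μ) :
    ∃ w : ι → ℝ, (∀ i, 0 < w i) ∧ (diagonal w * A + Aᵀ * diagonal w).PosDef := by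
  have hA' : IsSemipositive A := hA.isSemipositive_of_spectrum_pos hpos
  have hAt : IsSemipositive Aᵀ :=
    hA.transpose.isSemipositive_of_spectrum_pos (by rwa [spectrum_transpose])
  obtain ⟨w, hw, hsemi⟩ := hA'.exists_diagonal_mul_add_transpose_mul_diagonal hAt
  have hWA : IsZMatrix (diagonal w * A) := hA.diagonal_mul fun i => (hw i).le
  have htranspose : (diagonal w * A)ᵀ = Aᵀ * diagonal w := by
    rw [transpose_mul, diagonal_transpose]
  have hsymm : (diagonal w * A + (diagonal w * A)ᵀ).IsHermitian := by
    simpa only [conjTranspose_eq_transpose_of_trivial] using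
      isHermitian_add_transpose_self (diagonal w * A)
  rw [← htranspose] at hsemi
  exact ⟨w, hw, htranspose ▸ (hWA.add hWA.transpose).posDef_of_isSemipositive hsemi hsymm⟩

/-- if `A` is a nonsingular M-matrix (nonpositive off-diagonal entries
and every eigenvalue with positive real part), then there exists a diagonal matrix
`W = diag(w)` with positive entries such that `W·A + Aᵀ·W` is positive definite. -/
theorem stmt11 (n : ℕ)
    (A : Matrix (Fin n) (Fin n) ℝ)
    (hZ : ∀ i j, i ≠ j → A i j ≤ 0)
    (hM : ∀ μ ∈ ((A.map (Complex.ofReal)).charpoly).roots, 0 < μ.re) :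
    ∃ w : Fin n → ℝ, (∀ i, 0 < w i) ∧
      (Matrix.diagonal w * A + A.transpose * Matrix.diagonal w).PosDef :=
  stmt11_general hZ fun _ hμ =>
    hM _ (map_mem_roots_charpoly_of_mem_spectrum Complex.ofRealHom hμ)
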